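/- Let E₁,…,E_{n+1}, F be Banach spaces, φ_i ∈ E_i' continuous linear functionals (i = 1,…,n), and u : E_{n+1} → F a bounded linear operator of cotype q ≥ 2 with constant C. Then the (n+1)-linear operator φ₁ ⊗ ⋯ ⊗ φₙ ⊗ u : E₁ × ⋯ × E_{n+1} → F, (x₁,…,x_{n+1}) ↦ φ₁(x₁) ⋯ φₙ(xₙ) u(x_{n+1}), has cotype 2q/(2+qn), with constant at most C · ‖φ₁‖ ⋯ ‖φₙ‖. -/

import Mathlib

/-!
In a one-dimensional space the Rademacher norm of a finite family is its `ℓ²` norm, by iterating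
the parallelogram law over the signs (`radNorm_scalar`). Since
`radNorm (φ ∘ x) ≤ ‖φ‖ * radNorm x` for a bounded linear functional `φ`, the scalars `φᵢ (xᵢ)` have
`ℓ²` norm at most `‖φᵢ‖ * radNorm xᵢ`, while the cotype of `u` bounds the `ℓ^q` norm of
`u (x_{n+1})`. The exponent `r = 2q/(2+qn)` is the one with `1/r = 1/q + n/2`, so Hölder's
inequality with `n` exponents `2` and one exponent `q` (`holder_prod_two`) multiplies these bounds.
-/

open scoped BigOperators

noncomputable def radNorm {F : Type*} [NormedAddCommGroup F] {k : ℕ} (y : Fin k → F) : ℝ :=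
  Real.sqrt (((2 : ℝ) ^ k)⁻¹ * ∑ ε : Fin k → Bool, ‖∑ j, (if ε j then y j else -y j)‖ ^ 2)

section Defs

variable {𝕜 : Type*} [RCLike 𝕜] {n : ℕ} {E : Fin n → Type*} {F : Type*}
  [∀ i, NormedAddCommGroup (E i)] [∀ i, NormedSpace 𝕜 (E i)]
  [NormedAddCommGroup F] [NormedSpace 𝕜 F]

/-- The `n`-linear operator `T` has type `(p 0, …, p (n-1))` with constant `C`. -/
def HasTypeWith (T : ContinuousMultilinearMap 𝕜 E F) (p : Fin n → ℝ) (C : ℝ) : Prop :=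
  ∀ (k : ℕ) (x : ∀ i, Fin k → E i),
    radNorm (fun j => T (fun i => x i j)) ≤ C * ∏ i, (∑ j, ‖x i j‖ ^ p i) ^ (1 / p i)

/-- The `n`-linear operator `T` has type `(p 0, …, p (n-1))`. -/
def HasType (T : ContinuousMultilinearMap 𝕜 E F) (p : Fin n → ℝ) : Prop :=
  ∃ C > 0, HasTypeWith T p C

/-- The `n`-linear operator `T` has cotype `q` with constant `M`. -/
def HasCotypeWith (T : ContinuousMultilinearMap 𝕜 E F) (q M : ℝ) : Prop :=
  ∀ (k : ℕ) (x : ∀ i, Fin k → E i),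
    (∑ j, ‖T (fun i => x i j)‖ ^ q) ^ (1 / q) ≤ M * ∏ i, radNorm (x i)

/-- The `n`-linear operator `T` has cotype `q`. -/
def HasCotype (T : ContinuousMultilinearMap 𝕜 E F) (q : ℝ) : Prop :=
  ∃ M > 0, HasCotypeWith T q M

end Defs

section LinDefs

variable {𝕜 : Type*} [RCLike 𝕜] {E F : Type*}
  [NormedAddCommGroup E] [NormedSpace 𝕜 E] [NormedAddCommGroup F] [NormedSpace 𝕜 F]

/-- The linear operator `u` has type `p` with constant `C`. -/
def LinHasTypeWith (u : E →L[𝕜] F) (p C : ℝ) : Prop :=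
  ∀ (k : ℕ) (x : Fin k → E),
    radNorm (fun j => u (x j)) ≤ C * (∑ j, ‖x j‖ ^ p) ^ (1 / p)

/-- The linear operator `u` has type `p`. -/
def LinHasType (u : E →L[𝕜] F) (p : ℝ) : Prop := ∃ C > 0, LinHasTypeWith u p C

/-- The linear operator `u` has cotype `q` with constant `C`. -/
def LinHasCotypeWith (u : E →L[𝕜] F) (q C : ℝ) : Prop :=
  ∀ (k : ℕ) (x : Fin k → E),
    (∑ j, ‖u (x j)‖ ^ q) ^ (1 / q) ≤ C * radNorm x

/-- The linear operator `u` has cotype `q`. -/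
def LinHasCotype (u : E →L[𝕜] F) (q : ℝ) : Prop := ∃ C > 0, LinHasCotypeWith u q C

end LinDefs

/-- The parallelogram law averaged over all signs. The offset `v` makes the induction on `k` work:
the first signed vector is absorbed into it. -/
lemma sum_signs_norm_sq {𝕜 : Type*} [RCLike 𝕜] (k : ℕ) (c : Fin k → 𝕜) (v : 𝕜) :
    ∑ ε : Fin k → Bool, ‖v + ∑ j, (if ε j then c j else -c j)‖ ^ 2
      = 2 ^ k * (‖v‖ ^ 2 + ∑ j, ‖c j‖ ^ 2) := by
  induction k generalizing v with
  | zero => simp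
  | succ k ih =>
    rw [← (Fin.consEquiv (fun _ => Bool)).sum_comp, Fintype.sum_prod_type]
    simp only [Fin.consEquiv_apply, Fin.sum_univ_succ, Fin.cons_zero, Fin.cons_succ,
      ← add_assoc, Fintype.sum_bool, ih (fun j => c j.succ)]
    have h := parallelogram_law_with_norm 𝕜 v (c 0)
    simp only [if_true, Bool.false_eq_true, if_false, ← sub_eq_add_neg]
    linear_combination 2 ^ k * h

lemma radNorm_scalar {𝕜 : Type*} [RCLike 𝕜] {k : ℕ} (c : Fin k → 𝕜) :
    radNorm c = Real.sqrt (∑ j, ‖c j‖ ^ 2) := by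
  have h := sum_signs_norm_sq k c 0
  simp only [zero_add] at h
  rw [radNorm, h]
  simp

lemma radNorm_clm_le {𝕜 E F : Type*} [RCLike 𝕜] [NormedAddCommGroup E] [NormedSpace 𝕜 E]
    [NormedAddCommGroup F] [NormedSpace 𝕜 F] (φ : E →L[𝕜] F) {k : ℕ} (x : Fin k → E) :
    radNorm (fun j => φ (x j)) ≤ ‖φ‖ * radNorm x := by
  unfold radNorm
  rw [← Real.sqrt_sq (norm_nonneg φ), ← Real.sqrt_mul (sq_nonneg _)]
  apply Real.sqrt_le_sqrt
  rw [mul_left_comm]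
  refine mul_le_mul_of_nonneg_left ?_ (by positivity)
  rw [Finset.mul_sum]
  refine Finset.sum_le_sum fun ε _ => ?_
  have h : ∑ j, (if ε j then φ (x j) else -φ (x j))
      = φ (∑ j, (if ε j then x j else -x j)) := by
    rw [map_sum]
    exact Finset.sum_congr rfl fun j _ => by split_ifs <;> simp
  rw [h, ← mul_pow]
  gcongr
  exact φ.le_opNorm _

open scoped NNReal in
/-- Hölder's inequality for `#t` factors in `ℓ²` and one factor in `ℓ^q`; the resulting exponent
`r` satisfies `1/r = 1/q + #t/2` and may be smaller than `1`. -/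
lemma holder_prod_two {ι κ : Type*} (s : Finset ι) (t : Finset κ) (f : κ → ι → ℝ≥0)
    (g : ι → ℝ≥0) {q : ℝ} (hq : 0 < q) :
    (∑ j ∈ s, ((∏ i ∈ t, f i j) * g j) ^ ((q⁻¹ + t.card / 2)⁻¹ : ℝ)) ^
        (1 / (q⁻¹ + t.card / 2)⁻¹ : ℝ)
      ≤ (∏ i ∈ t, (∑ j ∈ s, f i j ^ (2 : ℝ)) ^ (1 / 2 : ℝ)) *
        (∑ j ∈ s, g j ^ q) ^ (1 / q) := by
  classical
  induction t using Finset.induction_on with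
  | empty => simp
  | insert a t ha ih =>
    have hpos : 0 < q⁻¹ + (t.card : ℝ) / 2 := by positivity
    have hr : Real.HolderTriple 2 (q⁻¹ + t.card / 2)⁻¹
        (q⁻¹ + (insert a t).card / 2)⁻¹ := by
      refine ⟨?_, by norm_num, by positivity⟩
      rw [Finset.card_insert_of_notMem ha]
      push_cast
      rw [inv_inv, inv_inv]
      ring
    simp only [Finset.prod_insert ha, mul_assoc]
    refine (NNReal.Lr_le_Lp_mul_Lq s (f a) (fun j => (∏ i ∈ t, f i j) * g j) hr).trans ?_
    exact mul_le_mul' le_rfl ih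

/-- Let `φᵢ ∈ Eᵢ'` (i = 1,…,n) and let `u : E_{n+1} → F` be a bounded linear operator of
cotype `q ≥ 2` with constant `C`. Then the `(n+1)`-linear operator `φ₁ ⊗ ⋯ ⊗ φₙ ⊗ u`,
`(x₁,…,x_{n+1}) ↦ φ₁(x₁) ⋯ φₙ(xₙ) u(x_{n+1})`, has cotype `2q/(2+qn)` with constant at
most `C · ‖φ₁‖ ⋯ ‖φₙ‖`. -/
theorem tensor_cotype
    {𝕜 : Type*} [RCLike 𝕜] {n : ℕ} {E : Fin (n + 1) → Type*} {F : Type*}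
    [∀ i, NormedAddCommGroup (E i)] [∀ i, NormedSpace 𝕜 (E i)] [∀ i, CompleteSpace (E i)]
    [NormedAddCommGroup F] [NormedSpace 𝕜 F] [CompleteSpace F]
    (φ : ∀ i : Fin n, E i.castSucc →L[𝕜] 𝕜) (u : E (Fin.last n) →L[𝕜] F)
    (q C : ℝ) (hq : 2 ≤ q) (hu : LinHasCotypeWith u q C)
    (T : ContinuousMultilinearMap 𝕜 E F)
    (hT : ∀ x : ∀ i, E i,
      T x = (∏ i : Fin n, φ i (x i.castSucc)) • u (x (Fin.last n))) :
    HasCotypeWith T (2 * q / (2 + q * n)) (C * ∏ i : Fin n, ‖φ i‖) := by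
  intro k x
  have hq0 : 0 < q := by linarith
  have hr : 2 * q / (2 + q * n) = (q⁻¹ + ((Finset.univ : Finset (Fin n)).card : ℝ) / 2)⁻¹ := by
    have h2 : 2 + q * (n : ℝ) ≠ 0 := by positivity
    rw [Finset.card_univ, Fintype.card_fin, eq_comm, inv_eq_iff_eq_inv, inv_div]
    field_simp
  have hφ : ∀ i : Fin n, (∑ j, ‖φ i (x i.castSucc j)‖ ^ (2 : ℝ)) ^ (1 / 2 : ℝ)
      ≤ ‖φ i‖ * radNorm (x i.castSucc) := by
    intro i
    have h := radNorm_clm_le (φ i) (x i.castSucc)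
    rw [radNorm_scalar, Real.sqrt_eq_rpow] at h
    simpa only [Real.rpow_two] using h
  have hold := holder_prod_two Finset.univ Finset.univ
    (fun (i : Fin n) j => ‖φ i (x i.castSucc j)‖₊) (fun j => ‖u (x (Fin.last n) j)‖₊) hq0
  rw [← hr, ← NNReal.coe_le_coe] at hold
  push_cast at hold
  simp only [hT, norm_smul, norm_prod]
  refine hold.trans ?_
  calc _ ≤ (∏ i : Fin n, ‖φ i‖ * radNorm (x i.castSucc)) * (C * radNorm (x (Fin.last n))) := by
        refine mul_le_mul (Finset.prod_le_prod (fun i _ => by positivity) fun i _ => hφ i)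
          (hu k _) (by positivity) (Finset.prod_nonneg fun i _ => ?_)
        exact mul_nonneg (norm_nonneg _) (Real.sqrt_nonneg _)
    _ = _ := by
        rw [Finset.prod_mul_distrib, Fin.prod_univ_castSucc]
        ring
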